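/- Let A be a countably infinite set and let P be a prefix–shift-compatible enumeration of Σ_A^fin. Then the Ott–Tomforde–Willis full shift (Σ_A, σ) with domain D = Σ_A ∖ {∅} has the Lipschitz shadowing property with respect to the OTW metric d_P, with Lipschitz constant L = 2 and δ₀ = 1/4: for every δ ∈ (0, 1/4], every δ-pseudo-orbit (x^n) admits a point x ∈ Σ_A with σ^j(x) ∈ D for all j ≥ 0 and d_P(σ^n(x), x^n) ≤ 2δ for all n ≥ 0. -/

import Mathlib

/-- The Ott–Tomforde–Willis full shift `Σ_A = A^ℕ ⊔ Σ_A^fin`: infinite words are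
functions `ℕ → A`, finite words (including the empty word `[]`) are lists. -/
abbrev OTWFullShift (A : Type*) := (ℕ → A) ⊕ List A

/-- `u ⪯ x`: the finite word `u` is an initial segment of `x ∈ Σ_A`. -/
def OTWPre {A : Type*} (u : List A) : OTWFullShift A → Prop
  | Sum.inl f => ∀ i : Fin u.length, u.get i = f i
  | Sum.inr v => u <+: v

/-- The shift map on `Σ_A`: delete the first symbol (finite words of length `≤ 1`
are sent to the empty word). -/
def otwShift {A : Type*} : OTWFullShift A → OTWFullShift A
  | Sum.inl f => Sum.inl fun n => f (n + 1)
  | Sum.inr v => Sum.inr v.tail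

/-- The Deaconu–Renault domain `D = Σ_A ∖ {∅}`. -/
def otwDomain (A : Type*) : Set (OTWFullShift A) := {x | x ≠ Sum.inr []}

/-- `P` is an enumeration of `Σ_A^fin` indexed by `{1, 2, 3, …}`:
`j ↦ P j` is a bijection from `{1, 2, …}` onto the finite words
(the value `P 0` is irrelevant). -/
def IsEnumeration {A : Type*} (P : ℕ → List A) : Prop :=
  Function.Bijective fun k : ℕ => P (k + 1)

open Classical in
/-- The OTW metric attached to the enumeration `P`:
`d_P(x,y) = 2^{-i}` where `i = min{j ≥ 1 : exactly one of P j ⪯ x, P j ⪯ y}`. -/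
noncomputable def otwDist {A : Type*} (P : ℕ → List A) (x y : OTWFullShift A) : ℝ :=
  if x = y then 0
  else (1 / 2 : ℝ) ^ sInf {j : ℕ | 1 ≤ j ∧ Xor' (OTWPre (P j) x) (OTWPre (P j) y)}

/-- A `δ`-pseudo-orbit for the system `(Σ_A, σ, D)` with respect to `d`. -/
def IsDeltaPseudoOrbit {X : Type*} (d : X → X → ℝ) (σ : X → X) (D : Set X)
    (δ : ℝ) (xs : ℕ → X) : Prop :=
  ∀ n : ℕ, xs n ∈ D ∧ d (σ (xs n)) (xs (n + 1)) < δ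

/-- The shadowing property for the system `(X, σ, D)` with respect to `d`. -/
def HasShadowing {X : Type*} (d : X → X → ℝ) (σ : X → X) (D : Set X) : Prop :=
  ∀ ε > (0:ℝ), ∃ δ > (0:ℝ), ∀ xs : ℕ → X, IsDeltaPseudoOrbit d σ D δ xs →
    ∃ x : X, (∀ j : ℕ, σ^[j] x ∈ D) ∧ ∀ i : ℕ, d (σ^[i] x) (xs i) < ε

/-- The Lipschitz shadowing property for the system `(X, σ, D)` with respect to `d`. -/
def HasLipschitzShadowing {X : Type*} (d : X → X → ℝ) (σ : X → X) (D : Set X) : Prop :=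
  ∃ L > (0:ℝ), ∃ δ₀ > (0:ℝ), ∀ δ : ℝ, 0 < δ → δ ≤ δ₀ →
    ∀ xs : ℕ → X, IsDeltaPseudoOrbit d σ D δ xs →
      ∃ x : X, (∀ j : ℕ, σ^[j] x ∈ D) ∧ ∀ n : ℕ, d (σ^[n] x) (xs n) ≤ L * δ

/-- `P` is a prefix–shift-compatible enumeration: `p_1 = ∅`, every proper prefix
of `p_k` appears earlier, and the shifted word `σ(p_k)` appears earlier whenever
`|p_k| ≥ 2`. -/
def PrefixShiftCompatible {A : Type*} (P : ℕ → List A) : Prop :=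
  P 1 = [] ∧
  (∀ k : ℕ, 1 ≤ k → ∀ u v : List A, P k = u ++ v → v ≠ [] →
    ∃ m : ℕ, 1 ≤ m ∧ m < k ∧ P m = u) ∧
  (∀ k : ℕ, 1 ≤ k → 2 ≤ (P k).length →
    ∃ m : ℕ, 1 ≤ m ∧ m < k ∧ P m = (P k).tail)

theorem otw_aux_xor (a b : Prop) : Xor' a b ↔ ¬(a ↔ b) := by
  unfold Xor'
  exact xor_iff_not_iff a b

theorem otw_aux_inl {A : Type*} (f : ℕ → A) (b : A) (w : List A) :
    OTWPre (b :: w) (Sum.inl f) ↔ b = f 0 ∧ OTWPre w (otwShift (Sum.inl f)) := by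
  simp only [OTWPre, otwShift]
  constructor
  · intro h
    refine ⟨h ⟨0, by simp⟩, fun i => ?_⟩
    have := h ⟨i.1 + 1, by simp⟩
    simpa using this
  · rintro ⟨h0, h⟩ ⟨i, hi⟩
    cases i with
    | zero => simpa using h0
    | succ i => simpa using h ⟨i, by simpa using hi⟩

theorem otw_aux_head {A : Type*} (y : OTWFullShift A) (hy : y ∈ otwDomain A) :
    ∃ a, ∀ b w, OTWPre (b :: w) y ↔ b = a ∧ OTWPre w (otwShift y) := by
  rcases y with f | v
  · exact ⟨f 0, fun b w => otw_aux_inl f b w⟩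
  · cases v with
    | nil => exact absurd rfl hy
    | cons a v => exact ⟨a, fun b w => by simp [OTWPre, otwShift, List.cons_prefix_cons]⟩

theorem otw_aux_nil {A : Type*} (y : OTWFullShift A) : OTWPre [] y := by
  rcases y with f | v
  · intro i
    exact i.elim0
  · exact List.nil_prefix

theorem otw_aux_ofFn {A : Type*} (f g : ℕ → A) (n : ℕ) :
    OTWPre (List.ofFn fun i : Fin n => f i) (Sum.inl g) ↔ ∀ i < n, f i = g i := by
  simp only [OTWPre]
  constructor
  · intro h i hi
    simpa using h ⟨i, by simpa using hi⟩
  · rintro h ⟨i, hi⟩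
    simpa using h i (by simpa using hi)

theorem otw_aux_sep {A : Type*} (f : ℕ → A) (y : OTWFullShift A)
    (h : ∀ u, OTWPre u (Sum.inl f) ↔ OTWPre u y) : Sum.inl f = y := by
  have h1 : ∀ n, OTWPre (List.ofFn fun i : Fin n => f i) y := fun n =>
    (h _).1 ((otw_aux_ofFn f f n).2 fun _ _ => rfl)
  rcases y with g | v
  · congr 1
    funext n
    exact (otw_aux_ofFn f g (n + 1)).1 (h1 (n + 1)) n (Nat.lt_succ_self n)
  · have h2 : (List.ofFn fun i : Fin (v.length + 1) => f i) <+: v := h1 (v.length + 1)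
    have := h2.length_le
    simp at this

theorem otw_aux_iter {A : Type*} (f : ℕ → A) (n : ℕ) :
    otwShift^[n] (Sum.inl f) = Sum.inl fun k => f (n + k) := by
  induction n with
  | zero => simp
  | succ n ih =>
    rw [Function.iterate_succ_apply', ih]
    simp only [otwShift]
    congr 1
    funext k
    congr 1
    omega

theorem otw_aux_agree {A : Type*} (P : ℕ → List A) (x y : OTWFullShift A) (δ : ℝ) (k : ℕ)
    (hk : 1 ≤ k) (hδ : δ ≤ (1 / 2 : ℝ) ^ k) (h : otwDist P x y < δ) :
    OTWPre (P k) x ↔ OTWPre (P k) y := by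
  unfold otwDist at h
  split_ifs at h with hxy
  · rw [hxy]
  · have h2 := (pow_lt_pow_iff_right_of_lt_one₀ (by norm_num : (0:ℝ) < 1 / 2)
      (by norm_num : (1 / 2 : ℝ) < 1)).1 (h.trans_le hδ)
    have h3 := Nat.notMem_of_lt_sInf h2
    by_contra hc
    exact h3 ⟨hk, by rw [otw_aux_xor]; exact hc⟩

/-- For a prefix–shift-compatible enumeration `P`, the OTW full shift with
domain `D = Σ_A ∖ {∅}` has the Lipschitz shadowing property with respect to
`d_P`, with Lipschitz constant `L = 2` and threshold `δ₀ = 1/4`. -/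
theorem otw_lipschitz_shadowing_holds {A : Type*} [Countable A] [Infinite A]
    (P : ℕ → List A) (hP : IsEnumeration P) (hpsc : PrefixShiftCompatible P) :
    ∀ δ : ℝ, 0 < δ → δ ≤ 1 / 4 →
      ∀ xs : ℕ → OTWFullShift A, IsDeltaPseudoOrbit (otwDist P) otwShift (otwDomain A) δ xs →
        ∃ x : OTWFullShift A, (∀ j : ℕ, otwShift^[j] x ∈ otwDomain A) ∧
          ∀ n : ℕ, otwDist P (otwShift^[n] x) (xs n) ≤ 2 * δ := by
  intro δ hδ _ xs hxs
  choose a ha using fun n => otw_aux_head (xs n) (hxs n).1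
  refine ⟨Sum.inl a, fun j => ?_, fun n => ?_⟩
  · rw [otw_aux_iter]
    simp [otwDomain]
  have key : ∀ k, 1 ≤ k → δ ≤ (1 / 2 : ℝ) ^ k → ∀ n,
      (OTWPre (P k) (otwShift^[n] (Sum.inl a)) ↔ OTWPre (P k) (xs n)) := by
    intro k
    induction k using Nat.strong_induction_on with
    | _ k ih =>
      intro hk hkδ n
      rcases hw : P k with _ | ⟨b, w⟩
      · simp [otw_aux_nil]
      · have hs : otwShift (otwShift^[n] (Sum.inl a)) = otwShift^[n + 1] (Sum.inl a) := by
          rw [Function.iterate_succ_apply']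
        have e1 : OTWPre (b :: w) (otwShift^[n] (Sum.inl a)) ↔
            b = a n ∧ OTWPre w (otwShift^[n + 1] (Sum.inl a)) := by
          rw [← hs, otw_aux_iter, otw_aux_inl]
          simp
        rw [e1, ha n]
        refine and_congr_right fun _ => ?_
        by_cases hw0 : w = []
        · subst hw0
          simp [otw_aux_nil]
        · obtain ⟨m, hm1, hmk, hPm⟩ := hpsc.2.2 k hk (by
            rw [hw]
            have := List.length_pos_iff.2 hw0
            simp
            omega)
          rw [hw, List.tail_cons] at hPm
          have hmδ : δ ≤ (1 / 2 : ℝ) ^ m :=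
            hkδ.trans (pow_le_pow_of_le_one (by norm_num) (by norm_num) hmk.le)
          rw [← hPm, ih m hmk hm1 hmδ (n + 1)]
          exact (otw_aux_agree P _ _ δ m hm1 hmδ (hxs n).2).symm
  unfold otwDist
  split_ifs with hxy
  · positivity
  · have hne : {j : ℕ | 1 ≤ j ∧ Xor' (OTWPre (P j) (otwShift^[n] (Sum.inl a)))
        (OTWPre (P j) (xs n))}.Nonempty := by
      by_contra hemp
      rw [Set.not_nonempty_iff_eq_empty] at hemp
      apply hxy
      rw [otw_aux_iter] at hemp ⊢
      apply otw_aux_sep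
      intro u
      obtain ⟨k, hk⟩ := hP.2 u
      by_contra hc
      have : k + 1 ∈ (∅ : Set ℕ) := by
        rw [← hemp]
        refine ⟨by omega, ?_⟩
        rw [otw_aux_xor]
        simpa only [show P (k + 1) = u from hk] using hc
      exact this
    obtain ⟨h1, h2⟩ := Nat.sInf_mem hne
    by_contra hc
    rw [otw_aux_xor] at h2
    exact h2 (key _ h1 (by linarith) n)
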